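/- Let (X, σ) be a left non-degenerate braided set, M a right module and N a left module over (X, σ). For ȳ = (y₁,…,y_k) ∈ X^k and 1 ≤ i ≤ k, let χ_i(ȳ) ∈ X denote the first component of J^{−1}( ((y_i ◃ y_{i−1}) ◃ ⋯ ) ◃ y₁, y₁, …, y_{i−1}, y_{i+1}, …, y_k ), where J is the (bijective) k-guitar map and the fold over the empty list for i = 1 is y₁ itself (so χ₁(ȳ) is the first component of J^{−1}(ȳ)). On C_k := M × X^k × N define d_i(m, ȳ, ν) := (m, y_i⊛y₁, …, y_i⊛y_{i−1}, y_i·y_{i+1}, …, y_i·y_k, y_i∙ν) and d'_i(m, ȳ, ν) := (m∙χ_i(ȳ), y₁, …, y_{i−1}, y_{i+1}, …, y_k, ν). Then: (1) the families (d'_i, d_i) form a pre-cubical structure in Set, i.e., d_i^ε ∘ d_j^ζ = d_{j−1}^ζ ∘ d_i^ε for i < j with d^ε, d^ζ taken independently from {d, d'}; (2) the extended guitar map Ĵ := id_M × J × id_N satisfies Ĵ ∘ d_i^{r,−} = d_i ∘ Ĵ and Ĵ ∘ d_i^{l,+} = d'_i ∘ Ĵ, where d_i^{l,+} := ρ_0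 ∘ σ_1 ∘ ⋯ ∘ σ_{i−1} and d_i^{r,−} := λ_k ∘ σ_{k−1} ∘ ⋯ ∘ σ_i. -/

import Mathlib

/-- `σ` applied at positions 1,2 of `X × X × X`. -/
def s12 {X : Type*} (σ : X × X → X × X) : X × X × X → X × X × X :=
  fun p => ((σ (p.1, p.2.1)).1, (σ (p.1, p.2.1)).2, p.2.2)

/-- `σ` applied at positions 2,3 of `X × X × X`. -/
def s23 {X : Type*} (σ : X × X → X × X) : X × X × X → X × X × X :=
  fun p => (p.1, σ p.2)

/-- Apply `σ` at (1-based) positions `i, i+1` of a list. -/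
def applyAt {X : Type*} (σ : X × X → X × X) : ℕ → List X → List X
  | 1, a :: b :: t => (σ (a, b)).1 :: (σ (a, b)).2 :: t
  | n + 2, a :: t => a :: applyAt σ (n + 1) t
  | _, l => l

/-- `σ_1 ∘ σ_2 ∘ ⋯ ∘ σ_j` (with `σ_j` applied first). -/
def chainLow {X : Type*} (σ : X × X → X × X) : ℕ → List X → List X
  | 0, l => l
  | j + 1, l => chainLow σ j (applyAt σ (j + 1) l)

/-- `σ_{i+c-1} ∘ ⋯ ∘ σ_{i+1} ∘ σ_i` (with `σ_i` applied first). -/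
def chainHigh {X : Type*} (σ : X × X → X × X) : ℕ → ℕ → List X → List X
  | _, 0, l => l
  | i, c + 1, l => chainHigh σ (i + 1) c (applyAt σ i l)

/-- `ρ_0`: act with the first `X`-entry on the `M`-component. -/
def rho0 {X M N : Type*} (actM : M → X → M) :
    M × List X × N → M × List X × N
  | (m, x :: t, ν) => (actM m x, t, ν)
  | p => p

/-- `λ_n`: act with the last `X`-entry on the `N`-component. -/
def lamN {X M N : Type*} (actN : X → N → N) :
    M × List X × N → M × List X × N :=
  fun p =>
    match p.2.1.getLast? with
    | some a => (p.1, p.2.1.dropLast, actN a p.2.2)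
    | none => p

/-- The braided boundary `d_i^{l,+} = ρ_0 ∘ σ_1 ∘ ⋯ ∘ σ_{i-1}`. -/
def dLP {X M N : Type*} (σ : X × X → X × X) (actM : M → X → M) (i : ℕ) :
    M × List X × N → M × List X × N :=
  fun p => rho0 actM (p.1, chainLow σ (i - 1) p.2.1, p.2.2)

/-- The braided boundary `d_i^{r,-} = λ_k ∘ σ_{k-1} ∘ ⋯ ∘ σ_i`. -/
def dRM {X M N : Type*} (σ : X × X → X × X) (actN : X → N → N) (n i : ℕ) :
    M × List X × N → M × List X × N :=
  fun p => lamN actN (p.1, chainHigh σ i (n - i) p.2.1, p.2.2)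

/-- The guitar map `J`, with components `J_i = r(…r(r(x_i,x_{i+1}),x_{i+2})…,x_n)`. -/
def guitar {X : Type*} (σ : X × X → X × X) : List X → List X
  | [] => []
  | x :: t => (t.foldl (fun a b => (σ (a, b)).2) x) :: guitar σ t

/-- The map `χ_i(ȳ)`: the first component of
`J⁻¹(((y_i ◃ y_{i-1}) ◃ ⋯) ◃ y₁, y₁, …, y_{i-1}, y_{i+1}, …, y_k)`. -/
def chiL {X : Type*} (tri : X → X → X) (Jinv : List X → List X)
    (i : ℕ) (ys : List X) : Option X :=
  match ys[i - 1]? with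
  | some x =>
      (Jinv ((((ys.take (i - 1)).reverse).foldl tri x)
        :: (ys.take (i - 1) ++ ys.drop i))).head?
  | none => none

/-- The boundary
`d_i(m, ȳ, ν) = (m, y_i⊛y₁,…,y_i⊛y_{i-1}, y_i·y_{i+1},…,y_i·y_k, y_i∙ν)`. -/
def dCyc {X M N : Type*} (star dot : X → X → X) (actN : X → N → N) (i : ℕ) :
    M × List X × N → M × List X × N :=
  fun p =>
    match p.2.1[i - 1]? with
    | some x =>
        (p.1, ((p.2.1.take (i - 1)).map (fun a => star x a))
          ++ ((p.2.1.drop i).map (fun a => dot x a)), actN x p.2.2)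
    | none => p

/-- The boundary `d'_i(m, ȳ, ν) = (m∙χ_i(ȳ), y₁,…,y_{i-1},y_{i+1},…,y_k, ν)`. -/
def dPrime {X M N : Type*} (tri : X → X → X) (Jinv : List X → List X)
    (actM : M → X → M) (i : ℕ) : M × List X × N → M × List X × N :=
  fun p =>
    match chiL tri Jinv i p.2.1 with
    | some c => (actM p.1 c, p.2.1.eraseIdx (i - 1), p.2.2)
    | none => p


namespace Aux
variable {X : Type*}

def R (r : X → X → X) : X → List X → X
  | x, [] => x
  | x, w :: t => R r (r x w) t

def pr (l r : X → X → X) : X → List X → List X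
  | _, [] => []
  | x, w :: t => l x w :: pr l r (r x w) t

def L (l : X → X → X) : List X → X → X
  | [], x => x
  | a :: s, x => l a (L l s x)

def rs (l r : X → X → X) : List X → X → List X
  | [], _ => []
  | a :: s, x => r a (L l s x) :: rs l r s x

variable (l r : X → X → X)

theorem R_append (s t : List X) (x : X) : R r x (s ++ t) = R r (R r x s) t := by
  induction s generalizing x with
  | nil => rfl
  | cons a s ih => exact ih _

theorem pr_append (s t : List X) (x : X) :
    pr l r x (s ++ t) = pr l r x s ++ pr l r (R r x s) t := by
  induction s generalizing x with
  | nil => rfl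
  | cons a s ih => simp [pr, R, ih]

theorem L_append (s t : List X) (x : X) : L l (s ++ t) x = L l s (L l t x) := by
  induction s with
  | nil => rfl
  | cons a s ih => simp [L, ih]

theorem rs_append (s t : List X) (x : X) :
    rs l r (s ++ t) x = rs l r s (L l t x) ++ rs l r t x := by
  induction s with
  | nil => rfl
  | cons a s ih => simp [rs, ih, L_append]

theorem pr_length (t : List X) (x : X) : (pr l r x t).length = t.length := by
  induction t generalizing x with
  | nil => rfl
  | cons a s ih => simp [pr, ih]

theorem rs_length (t : List X) (x : X) : (rs l r t x).length = t.length := by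
  induction t with
  | nil => rfl
  | cons a s ih => simp [rs, ih]

theorem R_eq (t : List X) (x : X) : t.foldl r x = R r x t := by
  induction t generalizing x with
  | nil => rfl
  | cons a s ih => exact ih _

variable {l r}
theorem lemA
    (e1 : ∀ a b c, l (l a b) (l (r a b) c) = l a (l b c))
    (e2 : ∀ a b c, r (l a b) (l (r a b) c) = l (r a (l b c)) (r b c))
    (e3 : ∀ a b c, r (r a b) c = r (r a (l b c)) (r b c))
    (s : List X) (x z : X) :
    L l s (l x z) = l (L l s x) (L l (rs l r s x) z) ∧
    L l (rs l r s (l x z)) (r x z) = r (L l s x) (L l (rs l r s x) z) ∧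
    rs l r (rs l r s (l x z)) (r x z) = rs l r (rs l r s x) z := by
  induction s with
  | nil => exact ⟨rfl, rfl, rfl⟩
  | cons a s ih =>
    obtain ⟨h1, h2, h3⟩ := ih
    simp only [L, rs]
    rw [h1, h2, h3]
    exact ⟨(e1 _ _ _).symm, (e2 _ _ _).symm, by rw [← e3]⟩

theorem lemB
    (e1 : ∀ a b c, l (l a b) (l (r a b) c) = l a (l b c))
    (e2 : ∀ a b c, r (l a b) (l (r a b) c) = l (r a (l b c)) (r b c))
    (e3 : ∀ a b c, r (r a b) c = r (r a (l b c)) (r b c))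
    (u : List X) (z y : X) :
    pr l r (l z y) (pr l r (r z y) u) = pr l r z (pr l r y u) ∧
    R r (l z y) (pr l r (r z y) u) = l (R r z (pr l r y u)) (R r y u) ∧
    R r (r z y) u = r (R r z (pr l r y u)) (R r y u) := by
  induction u generalizing z y with
  | nil => exact ⟨rfl, rfl, rfl⟩
  | cons a u ih =>
    obtain ⟨h1, h2, h3⟩ := ih (r z (l y a)) (r y a)
    simp only [pr, R]
    rw [e1, e2, e3, h1, h2, h3]
    exact ⟨rfl, rfl, rfl⟩

theorem lemC
    (e1 : ∀ a b c, l (l a b) (l (r a b) c) = l a (l b c))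
    (e2 : ∀ a b c, r (l a b) (l (r a b) c) = l (r a (l b c)) (r b c))
    (e3 : ∀ a b c, r (r a b) c = r (r a (l b c)) (r b c))
    (t : List X) (x y : X) :
    l x (L l t y) = L l (pr l r x t) (l (R r x t) y) ∧
    pr l r (r x (L l t y)) (rs l r t y) = rs l r (pr l r x t) (l (R r x t) y) ∧
    R r (r x (L l t y)) (rs l r t y) = r (R r x t) y := by
  induction t generalizing x with
  | nil => exact ⟨rfl, rfl, rfl⟩
  | cons a t ih =>
    obtain ⟨h1, h2, h3⟩ := ih (r x a)
    simp only [L, pr, R, rs]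
    rw [← h1, ← h2, ← h3, e1, e2, ← e3]
    exact ⟨rfl, rfl, rfl⟩

theorem star_R
    (e1 : ∀ a b c, l (l a b) (l (r a b) c) = l a (l b c))
    (e2 : ∀ a b c, r (l a b) (l (r a b) c) = l (r a (l b c)) (r b c))
    (e3 : ∀ a b c, r (r a b) c = r (r a (l b c)) (r b c))
    (star : X → X → X)
    (hs1 : ∀ a b, star b (r a b) = a)
    (a x : X) (t : List X) : star (R r x t) (R r a (x :: t)) = R r a (pr l r x t) := by
  have h := (lemB e1 e2 e3 t a x).2.2
  show star (R r x t) (R r (r a x) t) = _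
  rw [h, hs1]

theorem dot_R
    (e1 : ∀ a b c, l (l a b) (l (r a b) c) = l a (l b c))
    (e2 : ∀ a b c, r (l a b) (l (r a b) c) = l (r a (l b c)) (r b c))
    (e3 : ∀ a b c, r (r a b) c = r (r a (l b c)) (r b c))
    (star dot : X → X → X)
    (hs1 : ∀ a b, star b (r a b) = a)
    (hdot : ∀ a b, dot a b = l (star b a) b)
    (a x : X) (t : List X) :
    dot (R r a (x :: t)) (R r x t) = R r (l a x) (pr l r (r a x) t) := by
  rw [hdot, star_R e1 e2 e3 star hs1]
  exact (lemB e1 e2 e3 t a x).2.1.symm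

theorem tri_R
    (e1 : ∀ a b c, l (l a b) (l (r a b) c) = l a (l b c))
    (e2 : ∀ a b c, r (l a b) (l (r a b) c) = l (r a (l b c)) (r b c))
    (e3 : ∀ a b c, r (r a b) c = r (r a (l b c)) (r b c))
    (star dot tri : X → X → X)
    (hs1 : ∀ a b, star b (r a b) = a)
    (hdot : ∀ a b, dot a b = l (star b a) b)
    (htri : ∀ a b, tri a b = r (dot b a) b)
    (a x : X) (t : List X) :
    tri (R r x t) (R r a (x :: t)) = R r (l a x) (r a x :: t) := by
  rw [htri, dot_R e1 e2 e3 star dot hs1 hdot]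
  exact (lemB e1 e2 e3 t (l a x) (r a x)).2.2.symm

end Aux

section
variable {X : Type*} (σ : X × X → X × X)

abbrev lf (a b : X) : X := (σ (a, b)).1
abbrev rf (a b : X) : X := (σ (a, b)).2
open Aux

theorem guitar_cons (x : X) (t : List X) :
    guitar σ (x :: t) = R (rf σ) x t :: guitar σ t := by
  rw [guitar]; congr 1; exact R_eq _ _ _

theorem guitar_length (t : List X) : (guitar σ t).length = t.length := by
  induction t with
  | nil => rfl
  | cons a t ih => simp [guitar_cons, ih]

theorem guitar_append (s t : List X) :
    guitar σ (s ++ t) = (guitar σ s).map (fun a => R (rf σ) a t) ++ guitar σ t := by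
  induction s with
  | nil => rfl
  | cons a s ih => simp [guitar_cons, ih, R_append]

theorem applyAt_mid (s t : List X) (a b : X) :
    applyAt σ (s.length + 1) (s ++ a :: b :: t) = s ++ lf σ a b :: rf σ a b :: t := by
  induction s with
  | nil => rfl
  | cons c s ih => simpa [applyAt] using ih

theorem chainLow_eq (s t : List X) (x : X) :
    chainLow σ s.length (s ++ x :: t) =
      L (lf σ) s x :: (rs (lf σ) (rf σ) s x ++ t) := by
  induction s using List.reverseRecOn generalizing x t with
  | nil => rfl
  | append_singleton s a ih =>
    simp only [List.length_append, List.length_cons, List.length_nil, chainLow,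
      List.append_assoc, List.cons_append, List.nil_append, zero_add]
    rw [applyAt_mid, ih, L_append, rs_append]
    simp [L, rs]

theorem chainHigh_eq (s t : List X) (x : X) :
    chainHigh σ (s.length + 1) t.length (s ++ x :: t) =
      (s ++ pr (lf σ) (rf σ) x t) ++ [R (rf σ) x t] := by
  induction t generalizing x s with
  | nil => simp [chainHigh, pr, R]
  | cons a t ih =>
    simp only [List.length_cons, chainHigh]
    rw [applyAt_mid]
    have := ih (s ++ [lf σ x a]) (rf σ x a)
    simpa [pr, R] using this

end

/-- For a left non-degenerate braided set `(X, σ)`, a right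
module `M` and a left module `N`, the families `(d'_i, d_i)` on `M × X^k × N`
form a pre-cubical structure in Set, and the extended guitar map
`Ĵ = id × J × id` intertwines `(d_i^{l,+}, d_i^{r,-})` with `(d'_i, d_i)`. -/
theorem statement_10 {X M N : Type*} (σ : X × X → X × X)
    (hYB : s12 σ ∘ s23 σ ∘ s12 σ = s23 σ ∘ s12 σ ∘ s23 σ)
    (star : X → X → X)
    (hstar1 : ∀ a b : X, (σ (star b a, b)).2 = a)
    (hstar2 : ∀ a b : X, star b ((σ (a, b)).2) = a)
    (dot : X → X → X)
    (hdot : ∀ a b : X, dot a b = (σ (star b a, b)).1)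
    (tri : X → X → X)
    (htri : ∀ a b : X, tri a b = (σ (dot b a, b)).2)
    (actM : M → X → M)
    (hM : ∀ (m : M) (a b : X),
      actM (actM m a) b = actM (actM m (σ (a, b)).1) (σ (a, b)).2)
    (actN : X → N → N)
    (hN : ∀ (a b : X) (n : N),
      actN a (actN b n) = actN (σ (a, b)).1 (actN (σ (a, b)).2 n))
    (Jinv : List X → List X)
    (hJ1 : ∀ l : List X, guitar σ (Jinv l) = l)
    (hJ2 : ∀ l : List X, Jinv (guitar σ l) = l) :
    (∀ (k i j : ℕ) (p : M × List X × N), p.2.1.length = k →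
      1 ≤ i → i < j → j ≤ k →
      dPrime tri Jinv actM i (dPrime tri Jinv actM j p)
        = dPrime tri Jinv actM (j - 1) (dPrime tri Jinv actM i p) ∧
      dPrime tri Jinv actM i (dCyc star dot actN j p)
        = dCyc star dot actN (j - 1) (dPrime tri Jinv actM i p) ∧
      dCyc star dot actN i (dPrime tri Jinv actM j p)
        = dPrime tri Jinv actM (j - 1) (dCyc star dot actN i p) ∧
      dCyc star dot actN i (dCyc star dot actN j p)
        = dCyc star dot actN (j - 1) (dCyc star dot actN i p)) ∧
    (∀ (k i : ℕ) (p : M × List X × N), p.2.1.length = k → 1 ≤ i → i ≤ k →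
      ((dRM σ actN k i p).1, guitar σ (dRM σ actN k i p).2.1,
          (dRM σ actN k i p).2.2)
        = dCyc star dot actN i (p.1, guitar σ p.2.1, p.2.2) ∧
      ((dLP σ actM i p).1, guitar σ (dLP σ actM i p).2.1,
          (dLP σ actM i p).2.2)
        = dPrime tri Jinv actM i (p.1, guitar σ p.2.1, p.2.2)) := by
  have hy : ∀ a b c, s12 σ (s23 σ (s12 σ (a, b, c))) = s23 σ (s12 σ (s23 σ (a, b, c))) :=
    fun a b c => congrFun hYB (a, b, c)
  have e1 : ∀ a b c, lf σ (lf σ a b) (lf σ (rf σ a b) c) = lf σ a (lf σ b c) :=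
    fun a b c => congrArg (fun p => p.1) (hy a b c)
  have e2 : ∀ a b c, rf σ (lf σ a b) (lf σ (rf σ a b) c)
      = lf σ (rf σ a (lf σ b c)) (rf σ b c) :=
    fun a b c => congrArg (fun p => p.2.1) (hy a b c)
  have e3 : ∀ a b c, rf σ (rf σ a b) c = rf σ (rf σ a (lf σ b c)) (rf σ b c) :=
    fun a b c => congrArg (fun p => p.2.2) (hy a b c)
  have hstar : ∀ a b, star b (rf σ a b) = a := hstar2
  -- dCyc on a guitar tuple
  have gpr : ∀ (t : List X) (x : X), guitar σ (Aux.pr (lf σ) (rf σ) x t)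
      = (guitar σ t).map (fun a => dot (Aux.R (rf σ) x t) a) := by
    intro t
    induction t with
    | nil => intro x; rfl
    | cons w t ih =>
      intro x
      simp only [Aux.pr, guitar_cons, List.map_cons]
      rw [ih, Aux.dot_R e1 e2 e3 star dot hstar hdot]
      rfl
  have hC : ∀ (s t w : List X) (x : X) (m : M) (ν : N) (i : ℕ), i = s.length + 1 →
      w = s ++ x :: t →
      dCyc star dot actN i (m, guitar σ w, ν)
        = (m, guitar σ (s ++ Aux.pr (lf σ) (rf σ) x t), actN (Aux.R (rf σ) x t) ν) := by
    intro s t w x m ν i hi hw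
    subst hi hw
    have hl : ((guitar σ s).map (fun a => Aux.R (rf σ) a (x :: t))).length = s.length := by
      simp [guitar_length]
    have h1 : (guitar σ (s ++ x :: t))[s.length]? = some (Aux.R (rf σ) x t) := by
      rw [guitar_append, guitar_cons, ← hl]; simp
    have h2 : (guitar σ (s ++ x :: t)).take s.length
        = (guitar σ s).map (fun a => Aux.R (rf σ) a (x :: t)) := by
      rw [guitar_append]; exact List.take_left' hl
    have h3 : (guitar σ (s ++ x :: t)).drop (s.length + 1) = guitar σ t := by
      rw [guitar_append, guitar_cons, ← hl, ← List.drop_drop, List.drop_left]; rfl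
    simp only [dCyc, Nat.add_sub_cancel]
    rw [h1]
    simp only [h2, h3]
    rw [guitar_append, gpr, List.map_map]
    congr 3
    apply List.map_congr_left
    intro a _
    exact Aux.star_R e1 e2 e3 star hstar a x t
  -- dPrime on a guitar tuple
  have gL : ∀ (s t : List X) (x : X), guitar σ (Aux.rs (lf σ) (rf σ) s x ++ t)
      = (guitar σ s).map (fun a => Aux.R (rf σ) a (x :: t)) ++ guitar σ t := by
    intro s t x
    induction s with
    | nil => rfl
    | cons a s ih =>
      simp only [Aux.rs, List.cons_append, guitar_cons, List.map_cons]
      rw [ih, Aux.R_append, (Aux.lemC e1 e2 e3 s a x).2.2]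
      rfl
  have gT : ∀ (s t : List X) (x : X),
      Aux.R (rf σ) (Aux.L (lf σ) s x) (Aux.rs (lf σ) (rf σ) s x ++ t)
      = ((guitar σ s).map (fun a => Aux.R (rf σ) a (x :: t))).reverse.foldl tri
          (Aux.R (rf σ) x t) := by
    intro s t x
    induction s with
    | nil => rfl
    | cons a s ih =>
      simp only [Aux.rs, Aux.L, List.cons_append, guitar_cons, List.map_cons,
        List.reverse_cons, List.foldl_append, List.foldl_cons, List.foldl_nil]
      rw [← ih, ← Aux.tri_R e1 e2 e3 star dot tri hstar hdot htri]
      congr 1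
      show Aux.R (rf σ) (rf σ a (Aux.L (lf σ) s x)) _ = _
      rw [Aux.R_append, (Aux.lemC e1 e2 e3 s a x).2.2]
      rfl
  have hP : ∀ (s t w : List X) (x : X) (m : M) (ν : N) (i : ℕ), i = s.length + 1 →
      w = s ++ x :: t →
      dPrime tri Jinv actM i (m, guitar σ w, ν)
        = (actM m (Aux.L (lf σ) s x), guitar σ (Aux.rs (lf σ) (rf σ) s x ++ t), ν) := by
    intro s t w x m ν i hi hw
    subst hi hw
    have hl : ((guitar σ s).map (fun a => Aux.R (rf σ) a (x :: t))).length = s.length := by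
      simp [guitar_length]
    have h1 : (guitar σ (s ++ x :: t))[s.length]? = some (Aux.R (rf σ) x t) := by
      rw [guitar_append, guitar_cons, ← hl]; simp
    have h2 : (guitar σ (s ++ x :: t)).take s.length
        = (guitar σ s).map (fun a => Aux.R (rf σ) a (x :: t)) := by
      rw [guitar_append]; exact List.take_left' hl
    have h3 : (guitar σ (s ++ x :: t)).drop (s.length + 1) = guitar σ t := by
      rw [guitar_append, guitar_cons, ← hl, ← List.drop_drop, List.drop_left]; rfl
    have h4 : chiL tri Jinv (s.length + 1) (guitar σ (s ++ x :: t))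
        = some (Aux.L (lf σ) s x) := by
      simp only [chiL, Nat.add_sub_cancel]
      rw [h1]
      simp only [h2, h3]
      rw [← gT, ← gL, ← guitar_cons, hJ2]
      rfl
    simp only [dPrime, Nat.add_sub_cancel]
    rw [h4]
    simp only
    rw [List.eraseIdx_eq_take_drop_succ, h2, h3, gL]
  have split : ∀ (w : List X) (i : ℕ), 1 ≤ i → i ≤ w.length →
      ∃ s x t, w = s ++ x :: t ∧ i = s.length + 1 := by
    intro w i h1 h2
    refine ⟨w.take (i - 1), w[i - 1]'(by omega), w.drop i, ?_, ?_⟩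
    · conv_lhs => rw [← List.take_append_drop (i - 1) w]
      congr 1
      rw [List.drop_eq_getElem_cons (by omega)]
      congr 2
      omega
    · rw [List.length_take]; omega
  refine ⟨?_, ?_⟩
  · rintro k i j ⟨m, ys, ν⟩ hk hi hij hj
    obtain ⟨xs, rfl⟩ : ∃ xs, ys = guitar σ xs := ⟨Jinv ys, (hJ1 ys).symm⟩
    simp only [guitar_length] at hk
    subst hk
    obtain ⟨v, y, u, rfl, rfl⟩ := split xs j (by omega) hj
    obtain ⟨s, x, t, rfl, rfl⟩ := split v i hi (by omega)
    have hj2 : (s ++ x :: t).length + 1 - 1 = s.length + t.length + 1 := by simp; omega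
    rw [hj2]
    have pP := hP (s ++ x :: t) u _ y m ν _ rfl rfl
    have pC := hC (s ++ x :: t) u _ y m ν _ rfl rfl
    have qP := hP s (t ++ y :: u) ((s ++ x :: t) ++ y :: u) x m ν _ rfl (by simp)
    have qC := hC s (t ++ y :: u) ((s ++ x :: t) ++ y :: u) x m ν _ rfl (by simp)
    rw [pP, pC, qP, qC]
    obtain ⟨a1, a2, a3⟩ := Aux.lemA e1 e2 e3 s x (Aux.L (lf σ) t y)
    obtain ⟨b1, b2, b3⟩ := Aux.lemB e1 e2 e3 u (Aux.R (rf σ) x t) y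
    obtain ⟨c1, c2, c3⟩ := Aux.lemC e1 e2 e3 t x y
    refine ⟨?_, ?_, ?_, ?_⟩
    · rw [hP (Aux.rs (lf σ) (rf σ) s (lf σ x (Aux.L (lf σ) t y)))
          (Aux.rs (lf σ) (rf σ) t y ++ u) _ (rf σ x (Aux.L (lf σ) t y)) _ _ _
          (by simp [Aux.rs_length]) (by simp [Aux.rs_append, Aux.rs, Aux.L]),
        hP (Aux.rs (lf σ) (rf σ) s x ++ t) u _ y _ _ _
          (by simp [Aux.rs_length]) (by simp)]
      rw [Aux.L_append, Aux.L_append, Aux.rs_append]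
      simp only [Aux.L]
      rw [a1, a2, a3, ← List.append_assoc]
      rw [hM m (Aux.L (lf σ) s x)]
    · rw [hP s (t ++ Aux.pr (lf σ) (rf σ) y u) _ x _ _ _ rfl (by simp),
        hC (Aux.rs (lf σ) (rf σ) s x ++ t) u _ y _ _ _
          (by simp [Aux.rs_length]) (by simp)]
      simp
    · rw [hC (Aux.rs (lf σ) (rf σ) s (lf σ x (Aux.L (lf σ) t y)))
          (Aux.rs (lf σ) (rf σ) t y ++ u) _ (rf σ x (Aux.L (lf σ) t y)) _ _ _
          (by simp [Aux.rs_length]) (by simp [Aux.rs_append, Aux.rs, Aux.L]),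
        hP (s ++ Aux.pr (lf σ) (rf σ) x t)
          (Aux.pr (lf σ) (rf σ) (rf σ (Aux.R (rf σ) x t) y) u) _
          (lf σ (Aux.R (rf σ) x t) y) _ _ _
          (by simp [Aux.pr_length]) (by simp [Aux.pr_append, Aux.pr])]
      rw [Aux.L_append, Aux.L_append, Aux.rs_append, Aux.pr_append, Aux.R_append,
        Aux.R_append]
      simp only [Aux.L, Aux.R]
      rw [c2, c3, ← c1, List.append_assoc]
    · rw [hC s (t ++ Aux.pr (lf σ) (rf σ) y u) _ x _ _ _ rfl (by simp),
        hC (s ++ Aux.pr (lf σ) (rf σ) x t)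
          (Aux.pr (lf σ) (rf σ) (rf σ (Aux.R (rf σ) x t) y) u) _
          (lf σ (Aux.R (rf σ) x t) y) _ _ _
          (by simp [Aux.pr_length]) (by simp [Aux.pr_append, Aux.pr])]
      rw [Aux.pr_append, Aux.R_append, Aux.R_append]
      simp only [Aux.R]
      rw [b1, b2, b3, List.append_assoc, hN]
  · rintro k i ⟨m, xs, ν⟩ hk hi hik
    simp only at hk
    subst hk
    obtain ⟨s, x, t, rfl, rfl⟩ := split xs i hi hik
    refine ⟨?_, ?_⟩
    · rw [hC s t _ x m ν _ rfl rfl]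
      have hlen : (s ++ x :: t).length - (s.length + 1) = t.length := by simp; omega
      simp only [dRM]
      rw [hlen, chainHigh_eq]
      simp [lamN]
    · rw [hP s t _ x m ν _ rfl rfl]
      simp only [dLP, Nat.add_sub_cancel]
      rw [chainLow_eq]
      rfl
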